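/- arXiv:2602.08035 — 4 statements merged into one kernel-verified Lean document; each statement's English description precedes it below -/
import Mathlib

section
/- Suppose the distributional preference ≿ satisfies the upper-bound property. Then for every S ⊆ 𝒮 and all S', S'' ∈ F(S), we have S' ∼ S''. -/
open Finset

variable {α : Type*}

/-- Strict part of a distributional preference. -/
def strictPref (pref : Finset α → Finset α → Prop) (A B : Finset α) : Prop :=
  pref A B ∧ ¬ pref B A

/-- Indifference part of a distributional preference. -/
def indiffPref (pref : Finset α → Finset α → Prop) (A B : Finset α) : Prop :=
  pref A B ∧ pref B A

/-- Incomparability under a distributional preference. -/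
def incomparable (pref : Finset α → Finset α → Prop) (A B : Finset α) : Prop :=
  ¬ pref A B ∧ ¬ pref B A

/-- `NW q S` is the collection of non-wasteful subsets of `S`. -/
def NW (q : ℕ) (S : Finset α) : Set (Finset α) :=
  {T | T ⊆ S ∧ T.card = min q S.card}

/-- The frontier of `S`: non-wasteful subsets undominated w.r.t. the preference. -/
def frontierSet (pref : Finset α → Finset α → Prop) (q : ℕ) (S : Finset α) :
    Set (Finset α) :=
  {T | T ∈ NW q S ∧ ∀ T' ∈ NW q S, ¬ strictPref pref T' T}

/-- The upper-bound property of a distributional preference. -/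
def upperBoundProperty [DecidableEq α] (pref : Finset α → Finset α → Prop) (q : ℕ) : Prop :=
  ∀ S S' : Finset α, S.card = q → S'.card = q → incomparable pref S S' →
    ∃ S'' ∈ NW q (S ∪ S'), strictPref pref S'' S ∨ strictPref pref S'' S'

/-- The maximizer property of a distributional preference. -/
def maximizerProperty [DecidableEq α] (pref : Finset α → Finset α → Prop) (q : ℕ) : Prop :=
  ∀ S S' : Finset α, S ≠ S' → S.card = q → S'.card = q →
    (∀ S'' ∈ NW q (S ∪ S'), pref S S'' ∧ pref S' S'') →
    ∃ s ∈ S \ S', ∃ s' ∈ S' \ S,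
      indiffPref pref (S.erase s ∪ {s'}) S ∧ indiffPref pref (S'.erase s' ∪ {s}) S'

/-- The improvement property of a distributional preference. -/
def improvementProperty [DecidableEq α] (pref : Finset α → Finset α → Prop) (q : ℕ) : Prop :=
  ∀ S S' : Finset α, S.card = q → S'.card = q → ∀ s ∈ S \ S',
    (∀ S'' ∈ NW q (S ∪ S'), s ∉ S'' → strictPref pref S S'') →
    (∀ S'' ∈ NW q (S ∪ S'), s ∈ S'' → pref S S'') →
    ∃ s' ∈ S' \ S, strictPref pref (S'.erase s' ∪ {s}) S'

/-- A choice rule is non-wasteful. -/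
def nonWasteful (q : ℕ) (Ch : Finset α → Finset α) : Prop :=
  ∀ S : Finset α, (Ch S).card = min q S.card

/-- A choice rule promotes the distributional preference. -/
def promotesPref (pref : Finset α → Finset α → Prop) (Ch : Finset α → Finset α) : Prop :=
  ∀ S : Finset α, ∀ S' ⊆ S, S'.card = (Ch S).card → ¬ strictPref pref S' (Ch S)

/-- A choice rule guarantees no justified envy with respect to priority ranking `π`. -/
def noJustifiedEnvy [DecidableEq α] (pref : Finset α → Finset α → Prop)
    (π : α → α → Prop) (Ch : Finset α → Finset α) : Prop :=
  ∀ S : Finset α, ∀ s ∈ Ch S, ∀ s' ∈ S \ Ch S,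
    pref ((Ch S).erase s ∪ {s'}) (Ch S) → π s s'

/-- Path independence of a choice rule. -/
def pathIndependent [DecidableEq α] (Ch : Finset α → Finset α) : Prop :=
  ∀ S S' : Finset α, Ch (S ∪ S') = Ch (Ch S ∪ S')

/-- Consistency of a choice rule. -/
def consistentRule [DecidableEq α] (Ch : Finset α → Finset α) : Prop :=
  ∀ S : Finset α, ∀ s ∈ S, s ∉ Ch S → Ch (S.erase s) = Ch S

/-- Substitutability of a choice rule. -/
def substitutableRule [DecidableEq α] (Ch : Finset α → Finset α) : Prop :=
  ∀ S : Finset α, ∀ s ∈ S, ∀ s' ∈ S, s ≠ s' → s ∈ Ch S → s ∈ Ch (S.erase s')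

/-- `l` lists the elements of `A` in strictly decreasing `π`-priority. -/
def descList [DecidableEq α] (π : α → α → Prop) (A : Finset α) (l : List α) : Prop :=
  l.Pairwise π ∧ l.Nodup ∧ l.toFinset = A

/-- `A` priority dominates `B` with respect to `π`. -/
def priorityDominates [DecidableEq α] (π : α → α → Prop) (A B : Finset α) : Prop :=
  B.card ≤ A.card ∧
  ∀ la lb : List α, descList π A la → descList π B lb →
    ∀ (k : ℕ) (ha : k < la.length) (hb : k < lb.length),
      la.get ⟨k, ha⟩ = lb.get ⟨k, hb⟩ ∨ π (la.get ⟨k, ha⟩) (lb.get ⟨k, hb⟩)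

/-- The revealed preference axiom for a choice rule: no revealed-priority cycles. -/
def revealedPrefAxiom [DecidableEq α] (pref : Finset α → Finset α → Prop)
    (Ch : Finset α → Finset α) : Prop :=
  ¬ ∃ (K : ℕ) (s : ℕ → α) (T : ℕ → Finset α), 0 < K ∧ s K = s 0 ∧
    ∀ k < K, s k ∈ Ch (T k) ∧ s (k + 1) ∈ T k \ Ch (T k) ∧
      pref ((Ch (T k)).erase (s k) ∪ {s (k + 1)}) (Ch (T k))

/-!
If `A` and `B` are non-wasteful subsets of `S`, then every non-wasteful subset of `A ∪ B` is a
non-wasteful subset of `S`. So the set that the upper-bound property supplies for two incomparable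
frontier sets of size `q` would dominate one of them within `S`, which the frontier excludes; and
comparable frontier sets are indifferent. When `S` has at most `q` elements, it is its own only
non-wasteful subset.
-/

section Frontier

variable {pref : Finset α → Finset α → Prop} {q : ℕ} {S T A B : Finset α}

lemma NW_subset_NW (hTS : T ⊆ S) (hcard : min q S.card ≤ T.card) : NW q T ⊆ NW q S := by
  rintro C ⟨hCT, hC⟩
  have hmin : min q T.card = min q S.card :=
    le_antisymm (min_le_min_left q (card_le_card hTS)) (le_min (min_le_left _ _) hcard)
  exact ⟨hCT.trans hTS, hC.trans hmin⟩

lemma NW_union_subset_NW [DecidableEq α] (hA : A ∈ NW q S) (hB : B ∈ NW q S) :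
    NW q (A ∪ B) ⊆ NW q S :=
  NW_subset_NW (union_subset hA.1 hB.1) (hA.2.ge.trans (card_le_card subset_union_left))

lemma eq_of_mem_NW_of_card_le (hA : A ∈ NW q S) (hS : S.card ≤ q) : A = S :=
  eq_of_subset_of_card_le hA.1 (hA.2.trans (min_eq_right hS)).ge

lemma card_eq_of_mem_NW_of_le_card (hA : A ∈ NW q S) (hS : q ≤ S.card) : A.card = q :=
  hA.2.trans (min_eq_left hS)

lemma pref_of_pref_of_mem_frontierSet (hA : A ∈ frontierSet pref q S) (hB : B ∈ NW q S)
    (hBA : pref B A) : pref A B := by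
  by_contra hAB
  exact hA.2 B hB ⟨hBA, hAB⟩

lemma indiffPref_of_not_incomparable (hA : A ∈ frontierSet pref q S)
    (hB : B ∈ frontierSet pref q S) (hAB : ¬ incomparable pref A B) : indiffPref pref A B := by
  obtain h | h : pref A B ∨ pref B A := by
    simpa only [incomparable, not_and_or, not_not] using hAB
  · exact ⟨h, pref_of_pref_of_mem_frontierSet hB hA.1 h⟩
  · exact ⟨pref_of_pref_of_mem_frontierSet hA hB.1 h, h⟩

lemma upperBoundProperty.not_incomparable [DecidableEq α] (hub : upperBoundProperty pref q)
    (hS : q ≤ S.card) (hA : A ∈ frontierSet pref q S) (hB : B ∈ frontierSet pref q S) :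
    ¬ incomparable pref A B := by
  intro hAB
  obtain ⟨C, hC, hCA | hCB⟩ := hub A B (card_eq_of_mem_NW_of_le_card hA.1 hS)
    (card_eq_of_mem_NW_of_le_card hB.1 hS) hAB
  · exact hA.2 C (NW_union_subset_NW hA.1 hB.1 hC) hCA
  · exact hB.2 C (NW_union_subset_NW hA.1 hB.1 hC) hCB

end Frontier

theorem stmt1_general {α : Type*} [DecidableEq α] (q : ℕ)
    (pref : Finset α → Finset α → Prop)
    (hrefl : ∀ A : Finset α, pref A A)
    (hub : upperBoundProperty pref q) :
    ∀ S : Finset α, ∀ S' ∈ frontierSet pref q S, ∀ S'' ∈ frontierSet pref q S,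
      indiffPref pref S' S'' := by
  intro S A hA B hB
  obtain hS | hS := le_total S.card q
  · have hAB : A = B :=
      (eq_of_mem_NW_of_card_le hA.1 hS).trans (eq_of_mem_NW_of_card_le hB.1 hS).symm
    exact hAB ▸ ⟨hrefl A, hrefl A⟩
  · exact indiffPref_of_not_incomparable hA hB (hub.not_incomparable hS hA hB)

/-- Under the upper-bound property, any two frontier sets are
indifferent. -/
theorem stmt1 {α : Type*} [Fintype α] [Nonempty α] [DecidableEq α]
    (q : ℕ) (hq : 0 < q)
    (pref : Finset α → Finset α → Prop)
    (hrefl : ∀ A : Finset α, pref A A)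
    (htrans : ∀ A B C : Finset α, pref A B → pref B C → pref A C)
    (hub : upperBoundProperty pref q) :
    ∀ S : Finset α, ∀ S' ∈ frontierSet pref q S, ∀ S'' ∈ frontierSet pref q S,
      indiffPref pref S' S'' :=
  stmt1_general q pref hrefl hub
end

section
/- Suppose the distributional preference ≿ satisfies the upper-bound property and the maximizer property, let π be a priority ranking on 𝒮, and let Ch* be a choice rule that is non-wasteful, promotes the distributional preference, and guarantees no justified envy with respect to π. If Ch is any choice rule and S ⊆ 𝒮 satisfies Ch(S) ≠ Ch*(S), then at least one of the following holds: (i) |Ch*(S)| > |Ch(S)|; (ii) Ch*(S) ≻ Ch(S); or (iii) Ch*(S) priority dominates Ch(S). -/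
open Finset

variable {α : Type*}

/-!
Write `A` for `Ch* S`. Since `A` is undominated among the subsets of `S` of size `q` and these are
finitely many, the upper-bound property makes `A` a greatest one. If `B ⊆ S` of size `q` is not
strictly worse than `A`, then it is greatest as well, and the maximizer property yields `s ∈ A \ B`
and `t ∈ B \ A` such that trading `t` for `s` keeps `B` greatest, while trading `s` for `t` keeps
`A` greatest; the absence of justified envy in `A` then gives `s π t`. Iterating turns `B` into `A`,
each trade raising a priority. The composite of these trades matches every student of `B` with a
distinct student of `A` of weakly higher priority, and by pigeonhole such a matching forces
rank-by-rank dominance.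
-/

section NonWastefulSubsets

variable {q : ℕ} {S A B : Finset α}

theorem card_eq_of_mem_NW (hS : q ≤ S.card) (hA : A ∈ NW q S) : A.card = q :=
  hA.2.trans (min_eq_left hS)

theorem lt_card_of_mem_NW_of_ne (hA : A ∈ NW q S) (hB : B ∈ NW q S) (hne : A ≠ B) :
    q < S.card := by
  by_contra! hS
  have eq_of_mem {C : Finset α} (hC : C ∈ NW q S) : C = S :=
    eq_of_subset_of_card_le hC.1 (hC.2.trans (min_eq_right hS)).ge
  exact hne ((eq_of_mem hA).trans (eq_of_mem hB).symm)

theorem NW_union_subset [DecidableEq α] (hA : A ∈ NW q S) (hB : B ⊆ S) :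
    NW q (A ∪ B) ⊆ NW q S := by
  rintro T ⟨hT, hTcard⟩
  have hunion : A ∪ B ⊆ S := union_subset hA.1 hB
  have hle : A.card ≤ (A ∪ B).card := card_le_card subset_union_left
  have hge : (A ∪ B).card ≤ S.card := card_le_card hunion
  have hAcard : A.card = min q S.card := hA.2
  exact ⟨hT.trans hunion, by omega⟩

theorem erase_union_singleton_mem_NW [DecidableEq α] {s t : α} (hB : B ∈ NW q S) (ht : t ∈ B)
    (hs : s ∈ S) (hsB : s ∉ B) : B.erase t ∪ {s} ∈ NW q S := by
  have hsBt : s ∉ B.erase t := fun h ↦ hsB (mem_of_mem_erase h)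
  refine ⟨union_subset ((erase_subset t B).trans hB.1) (singleton_subset_iff.2 hs), ?_⟩
  rw [card_union_of_disjoint (disjoint_singleton_right.2 hsBt), card_singleton,
    card_erase_add_one ht, hB.2]

theorem mem_NW_of_min_le_card (hA : A ⊆ S) (hAq : A.card ≤ q) (hle : min q S.card ≤ A.card) :
    A ∈ NW q S :=
  ⟨hA, (le_min hAq (card_le_card hA)).antisymm hle⟩

end NonWastefulSubsets

section Frontier

variable {pref : Finset α → Finset α → Prop} {q : ℕ} {S A B : Finset α}

instance isStrictOrder_strictPref [IsTrans (Finset α) pref] :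
    IsStrictOrder (Finset α) (strictPref pref) where
  irrefl _ h := h.2 h.1
  trans _ _ _ hAB hBC := ⟨_root_.trans hAB.1 hBC.1, fun hCA ↦ hAB.2 (_root_.trans hBC.1 hCA)⟩

theorem mem_frontierSet_of_nonWasteful_of_promotesPref {Ch : Finset α → Finset α}
    (hsub : Ch S ⊆ S) (hnw : nonWasteful q Ch) (hpd : promotesPref pref Ch) :
    Ch S ∈ frontierSet pref q S :=
  ⟨⟨hsub, hnw S⟩, fun T hT ↦ hpd S T hT.1 (hT.2.trans (hnw S).symm)⟩

theorem pref_of_mem_frontierSet [DecidableEq α] [IsTrans (Finset α) pref]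
    (hub : upperBoundProperty pref q) (hS : q ≤ S.card) (hA : A ∈ frontierSet pref q S)
    (hB : B ∈ NW q S) : pref A B := by
  have hfin : (NW q S).Finite := S.powerset.finite_toSet.subset fun T hT ↦ mem_powerset.2 hT.1
  refine (hfin.wellFoundedOn (r := strictPref pref)).induction hB fun B hB ih ↦ ?_
  by_contra hAB
  have hBA : ¬ pref B A := fun hBA ↦ hA.2 B hB ⟨hBA, hAB⟩
  obtain ⟨T, hT, hTA | hTB⟩ :=
    hub A B (card_eq_of_mem_NW hS hA.1) (card_eq_of_mem_NW hS hB) ⟨hAB, hBA⟩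
  · exact hA.2 T (NW_union_subset hA.1 hB.1 hT) hTA
  · exact hAB (_root_.trans (ih T (NW_union_subset hA.1 hB.1 hT) hTB) hTB.1)

end Frontier

section PriorityMatching

variable {π : α → α → Prop} {A B C : Finset α}

/-- `A` matches `B` in priority: some injection of `B` into `A` sends each student of `B` to itself
or to a student of higher priority. Unlike `priorityDominates`, this composes along a sequence of
exchanges, as it refers to no enumeration of the sets. The injection is encoded as a map on all of
`α`, constrained only on `B`. -/
def PriorityMatches (π : α → α → Prop) (A B : Finset α) : Prop :=
  ∃ f : α → α, Set.MapsTo f B A ∧ Set.InjOn f B ∧ ∀ b ∈ B, Relation.ReflGen π (f b) b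

theorem PriorityMatches.refl (A : Finset α) : PriorityMatches π A A :=
  ⟨id, Set.mapsTo_id _, Set.injOn_id _, fun _ _ ↦ .refl⟩

theorem PriorityMatches.trans [IsTrans α π] (hAB : PriorityMatches π A B)
    (hBC : PriorityMatches π B C) : PriorityMatches π A C := by
  obtain ⟨f, hf, hfinj, hfle⟩ := hAB
  obtain ⟨g, hg, hginj, hgle⟩ := hBC
  exact ⟨f ∘ g, hf.comp hg, hfinj.comp hginj hg,
    fun c hc ↦ _root_.trans (hfle (g c) (hg hc)) (hgle c hc)⟩

theorem PriorityMatches.erase_union_singleton [DecidableEq α] {s t : α} (hs : s ∉ B)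
    (hst : π s t) : PriorityMatches π (B.erase t ∪ {s}) B := by
  have swap_apply {b : α} (hb : b ∈ B) : Equiv.swap s t b = if b = t then s else b := by
    rw [Equiv.swap_apply_def, if_neg (ne_of_mem_of_not_mem hb hs)]
  refine ⟨Equiv.swap s t, fun b hb ↦ ?_, (Equiv.injective _).injOn, fun b hb ↦ ?_⟩
  · rw [swap_apply hb, mem_coe, mem_union, mem_erase, mem_singleton]
    split_ifs with hbt
    · exact .inr rfl
    · exact .inl ⟨hbt, hb⟩
  · rw [swap_apply hb]
    split_ifs with hbt
    · exact .single (hbt ▸ hst)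
    · exact .refl

theorem exists_mem_take_map_mem_drop {β : Type*} {f : α → β} {l : List α}
    {l' : List β} {k : ℕ} (hnodup : l.Nodup) (hmaps : ∀ a ∈ l, f a ∈ l')
    (hinj : Set.InjOn f {a | a ∈ l}) (hk : k < l.length) :
    ∃ a ∈ l.take (k + 1), f a ∈ l'.drop k := by
  classical
  have hmem {a : α} (ha : a ∈ l.take (k + 1)) : a ∈ l := List.mem_of_mem_take ha
  have hnodup_map : ((l.take (k + 1)).map f).Nodup :=
    (hnodup.sublist (List.take_sublist _ _)).map_on fun a ha b hb ↦ hinj (hmem ha) (hmem hb)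
  have hcard : (l'.take k).toFinset.card < ((l.take (k + 1)).map f).toFinset.card :=
    calc (l'.take k).toFinset.card ≤ (l'.take k).length := List.toFinset_card_le _
      _ ≤ k := List.length_take_le _ _
      _ < ((l.take (k + 1)).map f).toFinset.card := by
        rw [List.toFinset_card_of_nodup hnodup_map, List.length_map, List.length_take]
        omega
  obtain ⟨_, hfa, hnotMem⟩ := exists_mem_notMem_of_card_lt_card hcard
  obtain ⟨a, ha, rfl⟩ := List.mem_map.1 (List.mem_toFinset.1 hfa)
  have hsplit : f a ∈ l'.take k ++ l'.drop k :=
    (List.take_append_drop k l').symm ▸ hmaps a (hmem ha)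
  exact ⟨a, ha, (List.mem_append.1 hsplit).resolve_left (mt List.mem_toFinset.2 hnotMem)⟩

theorem reflGen_getElem_of_mem_take {l : List α} {k : ℕ} {a : α}
    (hl : l.Pairwise π) (hk : k < l.length) (ha : a ∈ l.take (k + 1)) :
    Relation.ReflGen π a l[k] := by
  have htake : (l.take k ++ [l[k]]).Pairwise π := List.take_append_getElem hk ▸ hl.take
  rw [← List.take_append_getElem hk] at ha
  rcases List.mem_append.1 ha with ha | ha
  · exact .single ((List.pairwise_append.1 htake).2.2 a ha l[k] (List.mem_singleton_self _))
  · exact List.mem_singleton.1 ha ▸ .refl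

theorem reflGen_getElem_of_mem_drop {l : List α} {k : ℕ} {a : α}
    (hl : l.Pairwise π) (hk : k < l.length) (ha : a ∈ l.drop k) :
    Relation.ReflGen π l[k] a := by
  have hdrop : (l[k] :: l.drop (k + 1)).Pairwise π := List.drop_eq_getElem_cons hk ▸ hl.drop
  rw [List.drop_eq_getElem_cons hk] at ha
  rcases List.mem_cons.1 ha with rfl | ha
  · exact .refl
  · exact .single (List.rel_of_pairwise_cons hdrop ha)

theorem PriorityMatches.priorityDominates [DecidableEq α] [IsTrans α π]
    (h : PriorityMatches π A B) : priorityDominates π A B := by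
  obtain ⟨f, hmaps, hinj, hle⟩ := h
  refine ⟨card_le_card_of_injOn f hmaps hinj, ?_⟩
  rintro la lb ⟨hla, -, rfl⟩ ⟨hlb, hnodup, rfl⟩ k ha hb
  simp only [List.coe_toFinset] at hmaps hinj
  obtain ⟨b, hbtake, hfb⟩ := exists_mem_take_map_mem_drop hnodup hmaps hinj hb
  have hbB : b ∈ lb.toFinset := List.mem_toFinset.2 (List.mem_of_mem_take hbtake)
  have hrank : Relation.ReflGen π la[k] lb[k] :=
    calc Relation.ReflGen π la[k] (f b) := reflGen_getElem_of_mem_drop hla ha hfb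
      Relation.ReflGen π _ b := hle b hbB
      Relation.ReflGen π _ lb[k] := reflGen_getElem_of_mem_take hlb hb hbtake
  exact ((Relation.reflGen_iff π _ _).1 hrank).imp_left Eq.symm

end PriorityMatching

section Exchange

variable [DecidableEq α] {pref : Finset α → Finset α → Prop} {π : α → α → Prop} {q : ℕ}
  {S A B : Finset α}

theorem maximizerProperty.exists_exchange [IsTrans (Finset α) pref]
    (hmax : maximizerProperty pref q) (hS : q ≤ S.card) (hA : A ∈ NW q S)
    (hgreatest : ∀ T ∈ NW q S, pref A T) (hB : B ∈ NW q S) (hBA : pref B A) (hne : A ≠ B) :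
    ∃ s ∈ A \ B, ∃ t ∈ B \ A, pref (A.erase s ∪ {t}) A ∧ pref (B.erase t ∪ {s}) B := by
  obtain ⟨s, hs, t, ht, hAs, hBt⟩ :=
    hmax A B hne (card_eq_of_mem_NW hS hA) (card_eq_of_mem_NW hS hB) fun T hT ↦
      have hAT : pref A T := hgreatest T (NW_union_subset hA hB.1 hT)
      ⟨hAT, _root_.trans hBA hAT⟩
  exact ⟨s, hs, t, ht, hAs.1, hBt.1⟩

theorem sdiff_erase_union_singleton_ssubset {s t : α} (hs : s ∈ A \ B) (ht : t ∉ A) :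
    A \ (B.erase t ∪ {s}) ⊂ A \ B := by
  have h : A \ (B.erase t ∪ {s}) = (A \ B).erase s := by
    ext a
    grind
  exact h ▸ erase_ssubset hs

theorem priorityMatches_of_pref [IsTrans (Finset α) pref] [IsTrans α π]
    (hmax : maximizerProperty pref q) (hS : q ≤ S.card) (hA : A ∈ NW q S)
    (hgreatest : ∀ T ∈ NW q S, pref A T)
    (henvy : ∀ s ∈ A, ∀ t ∈ S \ A, pref (A.erase s ∪ {t}) A → π s t)
    (hB : B ∈ NW q S) (hBA : pref B A) : PriorityMatches π A B := by
  induction hD : A \ B using Finset.strongInduction generalizing B with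
  | H D ih =>
    subst hD
    rcases eq_or_ne A B with rfl | hne
    · exact .refl A
    obtain ⟨s, hs, t, ht, hAs, hBt⟩ := hmax.exists_exchange hS hA hgreatest hB hBA hne
    obtain ⟨⟨hsA, hsB⟩, htB, htA⟩ := mem_sdiff.1 hs, mem_sdiff.1 ht
    have hpriority : π s t := henvy s hsA t (mem_sdiff.2 ⟨hB.1 htB, htA⟩) hAs
    have hmatches : PriorityMatches π A (B.erase t ∪ {s}) :=
      ih _ (sdiff_erase_union_singleton_ssubset hs htA)
        (erase_union_singleton_mem_NW hB htB (hA.1 hsA) hsB) (_root_.trans hBt hBA) rfl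
    exact hmatches.trans (.erase_union_singleton hsB hpriority)

end Exchange

theorem stmt6_general [DecidableEq α] {q : ℕ} {pref : Finset α → Finset α → Prop}
    [IsTrans (Finset α) pref] (hub : upperBoundProperty pref q) (hmax : maximizerProperty pref q)
    {π : α → α → Prop} [IsTrans α π] {ChStar : Finset α → Finset α}
    (hsubStar : ∀ S, ChStar S ⊆ S) (hnwStar : nonWasteful q ChStar)
    (hpdStar : promotesPref pref ChStar) (hneStar : noJustifiedEnvy pref π ChStar)
    {S B : Finset α} (hsub : B ⊆ S) (hcard : B.card ≤ q) (hne : B ≠ ChStar S) :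
    B.card < (ChStar S).card ∨ strictPref pref (ChStar S) B ∨
      priorityDominates π (ChStar S) B := by
  refine (lt_or_ge B.card (ChStar S).card).imp_right fun hle ↦ ?_
  have hfrontier : ChStar S ∈ frontierSet pref q S :=
    mem_frontierSet_of_nonWasteful_of_promotesPref (hsubStar S) hnwStar hpdStar
  have hB : B ∈ NW q S := mem_NW_of_min_le_card hsub hcard (hnwStar S ▸ hle)
  have hS : q ≤ S.card := (lt_card_of_mem_NW_of_ne hB hfrontier.1 hne).le
  have hgreatest : ∀ T ∈ NW q S, pref (ChStar S) T := fun T hT ↦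
    pref_of_mem_frontierSet hub hS hfrontier hT
  by_cases hBA : pref B (ChStar S)
  · exact .inr
      (priorityMatches_of_pref hmax hS hfrontier.1 hgreatest (hneStar S) hB hBA).priorityDominates
  · exact .inl ⟨hgreatest B hB, hBA⟩

/-- Any choice rule deviating from the (unique) rule `Ch*` that is
non-wasteful, promotes the distributional preference, and guarantees no
justified envy is wasteful, distributionally inferior, or priority inferior. -/
theorem stmt6 {α : Type*} [Fintype α] [Nonempty α] [DecidableEq α]
    (q : ℕ) (hq : 0 < q)
    (pref : Finset α → Finset α → Prop)
    (hrefl : ∀ A : Finset α, pref A A)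
    (htrans : ∀ A B C : Finset α, pref A B → pref B C → pref A C)
    (hub : upperBoundProperty pref q)
    (hmax : maximizerProperty pref q)
    (π : α → α → Prop) (hπ : IsStrictTotalOrder α π)
    (ChStar : Finset α → Finset α)
    (hsubStar : ∀ S : Finset α, ChStar S ⊆ S)
    (hcardStar : ∀ S : Finset α, (ChStar S).card ≤ q)
    (hnwStar : nonWasteful q ChStar) (hpdStar : promotesPref pref ChStar)
    (hneStar : noJustifiedEnvy pref π ChStar)
    (Ch : Finset α → Finset α)
    (hsub : ∀ S : Finset α, Ch S ⊆ S) (hcard : ∀ S : Finset α, (Ch S).card ≤ q)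
    (S : Finset α) (hne : Ch S ≠ ChStar S) :
    (Ch S).card < (ChStar S).card ∨
    strictPref pref (ChStar S) (Ch S) ∨
    priorityDominates π (ChStar S) (Ch S) :=
  have : IsTrans (Finset α) pref := ⟨htrans⟩
  stmt6_general hub hmax hsubStar hnwStar hpdStar hneStar (hsub S) (hcard S) hne
end

section
/- Suppose the distributional preference ≿ satisfies the upper-bound property and the maximizer property. If a choice rule Ch is non-wasteful, promotes the distributional preference, and satisfies the revealed preference axiom, then there exists a priority ranking π on 𝒮 such that Ch guarantees no justified envy with respect to π. -/
open Finset

variable {α : Type*}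

/-!
A priority ranking leaves no justified envy exactly when it extends the revealed priority relation
`s` over `s'`: some set has `s` chosen and `s'` rejected although replacing `s` by `s'` would be
weakly better for the distribution. The revealed preference axiom says that this relation has no
cycles, so its transitive closure is a strict partial order, which Szpilrajn's theorem extends to a
ranking.
-/

section Extension

variable {r : α → α → Prop}

theorem exists_seq_of_transGen {a b : α} (h : Relation.TransGen r a b) :
    ∃ (n : ℕ) (s : ℕ → α), 0 < n ∧ s 0 = a ∧ s n = b ∧ ∀ k < n, r (s k) (s (k + 1)) := by
  induction h using Relation.TransGen.head_induction_on with
  | @single a hab =>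
    refine ⟨1, fun k ↦ k.casesOn a fun _ ↦ b, one_pos, rfl, rfl, fun k hk ↦ ?_⟩
    obtain rfl := Nat.lt_one_iff.1 hk
    exact hab
  | @head a c hac _ ih =>
    obtain ⟨n, s, -, rfl, rfl, hs⟩ := ih
    refine ⟨n + 1, fun k ↦ k.casesOn a s, n.succ_pos, rfl, rfl, fun k hk ↦ ?_⟩
    cases k with
    | zero => exact hac
    | succ k => exact hs k (Nat.lt_of_succ_lt_succ hk)

theorem exists_isStrictTotalOrder_ge (r : α → α → Prop) [IsStrictOrder α r] :
    ∃ π : α → α → Prop, IsStrictTotalOrder α π ∧ r ≤ π := by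
  let _ : PartialOrder α := partialOrderOfSO r
  have strictMono : StrictMono (toLinearExtension : α →o LinearExtension α) :=
    toLinearExtension.monotone.strictMono_of_injective Function.injective_id
  exact ⟨((· < ·) : LinearExtension α → LinearExtension α → Prop),
    inferInstanceAs (IsStrictTotalOrder (LinearExtension α) (· < ·)), fun _ _ hab ↦ strictMono hab⟩

theorem exists_isStrictTotalOrder_ge_of_irrefl_transGen (h : Std.Irrefl (Relation.TransGen r)) :
    ∃ π : α → α → Prop, IsStrictTotalOrder α π ∧ r ≤ π := by
  have : IsStrictOrder α (Relation.TransGen r) := { }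
  obtain ⟨π, hπ, hle⟩ := exists_isStrictTotalOrder_ge (Relation.TransGen r)
  exact ⟨π, hπ, fun a b hab ↦ hle a b (.single hab)⟩

end Extension

section ChoiceRule

variable [DecidableEq α] {pref : Finset α → Finset α → Prop} {Ch : Finset α → Finset α}

/-- The revealed priority relation of the choice rule `Ch`, whose cycles the revealed preference
axiom forbids: from some set, `Ch` chooses `s` and rejects `s'` although replacing `s` by `s'` would
be weakly better for the distribution. -/
def revealedPriority (pref : Finset α → Finset α → Prop) (Ch : Finset α → Finset α)
    (s s' : α) : Prop :=
  ∃ S : Finset α, s ∈ Ch S ∧ s' ∈ S \ Ch S ∧ pref ((Ch S).erase s ∪ {s'}) (Ch S)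

theorem irrefl_transGen_revealedPriority (h : revealedPrefAxiom pref Ch) :
    Std.Irrefl (Relation.TransGen (revealedPriority pref Ch)) where
  irrefl a ha := by
    obtain ⟨K, s, hK, hs0, hsK, hs⟩ := exists_seq_of_transGen ha
    choose! T hT using hs
    exact h ⟨K, s, T, hK, hsK.trans hs0.symm, hT⟩

theorem noJustifiedEnvy_iff_revealedPriority_le {π : α → α → Prop} :
    noJustifiedEnvy pref π Ch ↔ revealedPriority pref Ch ≤ π :=
  ⟨fun h _ _ ⟨S, hs, hs', hpref⟩ ↦ h S _ hs _ hs' hpref,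
    fun h S _ hs _ hs' hpref ↦ h _ _ ⟨S, hs, hs', hpref⟩⟩

theorem stmt10_general (hrp : revealedPrefAxiom pref Ch) :
    ∃ π : α → α → Prop, IsStrictTotalOrder α π ∧ noJustifiedEnvy pref π Ch := by
  simp only [noJustifiedEnvy_iff_revealedPriority_le]
  exact exists_isStrictTotalOrder_ge_of_irrefl_transGen (irrefl_transGen_revealedPriority hrp)

end ChoiceRule

/-- Under the upper-bound and maximizer properties, any choice
rule that is non-wasteful, promotes the distributional preference, and
satisfies the revealed preference axiom guarantees no justified envy with
respect to some priority ranking. -/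
theorem stmt10 {α : Type*} [Fintype α] [Nonempty α] [DecidableEq α]
    (q : ℕ) (hq : 0 < q)
    (pref : Finset α → Finset α → Prop)
    (hrefl : ∀ A : Finset α, pref A A)
    (htrans : ∀ A B C : Finset α, pref A B → pref B C → pref A C)
    (hub : upperBoundProperty pref q)
    (hmax : maximizerProperty pref q)
    (Ch : Finset α → Finset α)
    (hsub : ∀ S : Finset α, Ch S ⊆ S) (hcard : ∀ S : Finset α, (Ch S).card ≤ q)
    (hnw : nonWasteful q Ch) (hpd : promotesPref pref Ch)
    (hrp : revealedPrefAxiom pref Ch) :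
    ∃ π : α → α → Prop, IsStrictTotalOrder α π ∧ noJustifiedEnvy pref π Ch :=
  stmt10_general hrp
end

section
/- A choice rule Ch satisfies path independence if and only if it satisfies both consistency and substitutability. -/
open Finset

variable {α : Type*}

/-!
Under `Ch S ⊆ S`, consistency says that `Ch T = Ch S` whenever `Ch S ⊆ T ⊆ S`, and substitutability
says that `Ch (S ∪ S') ⊆ Ch S ∪ S'`. The latter inclusion places `Ch S ∪ S'` between `Ch (S ∪ S')`
and `S ∪ S'`, where the former forces `Ch (Ch S ∪ S') = Ch (S ∪ S')`. Conversely, path independence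
gives both properties: take `S' = T` for the first, and apply `Ch (Ch S ∪ S') ⊆ Ch S ∪ S'` for the
second.
-/

section ChoiceRule

variable [DecidableEq α] {Ch : Finset α → Finset α}

theorem consistentRule.eq_of_subset (hcon : consistentRule Ch) {S T : Finset α}
    (hST : Ch S ⊆ T) (hTS : T ⊆ S) : Ch T = Ch S := by
  induction S using Finset.strongInduction with
  | H S ih =>
    obtain rfl | hssub := hTS.eq_or_ssubset
    · rfl
    · obtain ⟨a, haS, hTa⟩ := ssubset_iff_exists_subset_erase.1 hssub
      have ha : a ∉ Ch S := (subset_erase.1 (hST.trans hTa)).2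
      have herase : Ch (S.erase a) = Ch S := hcon S a haS ha
      calc
        Ch T = Ch (S.erase a) := ih _ (erase_ssubset haS) (herase ▸ hST) hTa
        _ = Ch S := herase

theorem consistentRule_iff_eq_of_subset (hsub : ∀ S, Ch S ⊆ S) :
    consistentRule Ch ↔ ∀ S T, Ch S ⊆ T → T ⊆ S → Ch T = Ch S :=
  ⟨fun hcon _ _ ↦ hcon.eq_of_subset, fun heq S s _ hs ↦
    heq S (S.erase s) (subset_erase.2 ⟨hsub S, hs⟩) (erase_subset s S)⟩

theorem substitutableRule.insert_subset (hsub : ∀ S, Ch S ⊆ S) (hsubst : substitutableRule Ch)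
    (a : α) (S : Finset α) : Ch (insert a S) ⊆ insert a (Ch S) := by
  intro s hs
  by_cases haS : a ∈ S
  · rw [insert_eq_of_mem haS] at hs
    exact mem_insert_of_mem hs
  · obtain rfl | hne := eq_or_ne s a
    · exact mem_insert_self s (Ch S)
    · have hmem := hsubst _ s (hsub _ hs) a (mem_insert_self a S) hne hs
      rw [erase_insert haS] at hmem
      exact mem_insert_of_mem hmem

theorem substitutableRule.union_subset (hsub : ∀ S, Ch S ⊆ S) (hsubst : substitutableRule Ch)
    (S S' : Finset α) : Ch (S ∪ S') ⊆ Ch S ∪ S' := by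
  induction S' using Finset.induction_on with
  | empty => simp
  | insert a S' _ ih =>
    calc
      Ch (S ∪ insert a S') = Ch (insert a (S ∪ S')) := by rw [union_insert]
      _ ⊆ insert a (Ch (S ∪ S')) := hsubst.insert_subset hsub a (S ∪ S')
      _ ⊆ insert a (Ch S ∪ S') := insert_subset_insert a ih
      _ = Ch S ∪ insert a S' := (union_insert a (Ch S) S').symm

theorem substitutableRule_iff_union_subset (hsub : ∀ S, Ch S ⊆ S) :
    substitutableRule Ch ↔ ∀ S S', Ch (S ∪ S') ⊆ Ch S ∪ S' := by
  refine ⟨fun hsubst ↦ hsubst.union_subset hsub, fun hunion S s _ s' hs' hne hs ↦ ?_⟩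
  have herase : S.erase s' ∪ {s'} = S := by
    rw [union_singleton, insert_erase hs']
  have hmem : s ∈ Ch (S.erase s') ∪ {s'} := hunion _ _ (herase.symm ▸ hs)
  exact (mem_union.1 hmem).resolve_right (notMem_singleton.2 hne)

theorem pathIndependent.eq_of_subset (hpath : pathIndependent Ch) {S T : Finset α}
    (hST : Ch S ⊆ T) (hTS : T ⊆ S) : Ch T = Ch S :=
  calc
    Ch T = Ch (Ch S ∪ T) := by rw [union_eq_right.2 hST]
    _ = Ch (S ∪ T) := (hpath S T).symm
    _ = Ch S := by rw [union_eq_left.2 hTS]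

theorem pathIndependent.union_subset (hsub : ∀ S, Ch S ⊆ S) (hpath : pathIndependent Ch)
    (S S' : Finset α) : Ch (S ∪ S') ⊆ Ch S ∪ S' :=
  (hpath S S').trans_subset (hsub (Ch S ∪ S'))

theorem stmt19_general (hsub : ∀ S, Ch S ⊆ S) :
    pathIndependent Ch ↔ consistentRule Ch ∧ substitutableRule Ch := by
  rw [consistentRule_iff_eq_of_subset hsub, substitutableRule_iff_union_subset hsub]
  constructor
  · intro hpath
    exact ⟨fun _ _ ↦ hpath.eq_of_subset, hpath.union_subset hsub⟩
  · rintro ⟨heq, hunion⟩ S S'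
    exact (heq (S ∪ S') (Ch S ∪ S') (hunion S S') (union_subset_union_left (hsub S))).symm

end ChoiceRule

/-- Aizerman–Malishevski: A choice rule satisfies path
independence if and only if it satisfies consistency and substitutability. -/
theorem stmt19 {α : Type*} [Fintype α] [Nonempty α] [DecidableEq α]
    (Ch : Finset α → Finset α) (hsub : ∀ S : Finset α, Ch S ⊆ S) :
    pathIndependent Ch ↔ (consistentRule Ch ∧ substitutableRule Ch) := by
  exact stmt19_general hsub
end
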